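/- arXiv:2412.16659 — 2 statements merged into one kernel-verified Lean document; each statement's English description precedes it below -/
import Mathlib

section
/- Let G ∈ ℝ^{p×p} be symmetric positive definite, λ₁ ≥ 0, λ₂ ≥ 0, θ̃ ∈ ℝ^p, and κ = (κ_1,…,κ_p) a vector of nonnegative weights. Let θ̂ be a global minimizer over ℝ^p of the single-block Elastic-Net objective F₁(θ) = (θ−θ̃)ᵀG(θ−θ̃) + λ₁ Σ_{j=1}^p κ_j|θ_j| + λ₂|θ|². Then for every θ₀ ∈ ℝ^p, |θ̂ − θ₀|² ≤ (4/(τ_min(G) + λ₂)²) ( λ₂² |θ₀|² + τ_max(G²) |θ̃ − θ₀|² + λ₁² |κ|² ), where |κ| is the Euclidean norm of the weight vector. -/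
/-!
Write `d = θ̂ - θ₀` and `r = θ̃ - θ₀`. Comparing the minimizer `θ̂` with the midpoint
`θ̂ - d/2` of `θ̂` and `θ₀`, and using `|θ̂ⱼ - dⱼ/2| ≤ |θ̂ⱼ| + |dⱼ|/2`, gives
`(3/4) (dᵀGd + λ₂|d|²) ≤ dᵀGr - λ₂⟨θ₀, d⟩ + (λ₁/2) ∑ κⱼ|dⱼ|`.
The left side is at least `(3/4) (τ_min(G) + λ₂) |d|²`, and by Cauchy-Schwarz the right side is at
most `|d| (|Gr| + λ₂|θ₀| + λ₁|κ|/2)`. Since `(a + b + c/2)² ≤ (9/4)(a² + b² + c²)`, cancelling `|d|`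
and squaring yields exactly the factor `4 = (9/4) (4/3)²`; finally `|Gr|² = rᵀG²r ≤ τ_max(G²)|r|²`.
The eigenvalue bounds are the Rayleigh inequalities `tauMin_mul_norm_sq_le` and
`le_tauMax_mul_norm_sq`.
-/

open Matrix

/-- smallest eigenvalue (infimum of the real spectrum) of a square real matrix -/
noncomputable def tauMin {p : ℕ} (M : Matrix (Fin p) (Fin p) ℝ) : ℝ :=
  sInf (spectrum ℝ M)

/-- largest eigenvalue (supremum of the real spectrum) of a square real matrix -/
noncomputable def tauMax {p : ℕ} (M : Matrix (Fin p) (Fin p) ℝ) : ℝ :=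
  sSup (spectrum ℝ M)

section Auxiliary

variable {p : ℕ}

lemma dotProduct_eq_inner (x y : EuclideanSpace ℝ (Fin p)) :
    (x : Fin p → ℝ) ⬝ᵥ (y : Fin p → ℝ) = inner ℝ x y := by
  simp [PiLp.inner_apply, dotProduct, mul_comm]

lemma spectrum_eq_range {M : Matrix (Fin p) (Fin p) ℝ} (hM : M.IsHermitian) :
    spectrum ℝ M = Set.range hM.eigenvalues := hM.spectrum_real_eq_range_eigenvalues

lemma tauMin_pos (hp : 1 ≤ p) {M : Matrix (Fin p) (Fin p) ℝ} (hM : M.PosDef) : 0 < tauMin M := by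
  have hs := spectrum_eq_range hM.isHermitian
  have hne : (spectrum ℝ M).Nonempty := by
    rw [hs]; exact ⟨_, ⟨0, hp⟩, rfl⟩
  have hfin : (spectrum ℝ M).Finite := by rw [hs]; exact Set.finite_range _
  have hmem : tauMin M ∈ spectrum ℝ M := hne.csInf_mem hfin
  rw [hs] at hmem
  obtain ⟨i, hi⟩ := hmem
  rw [← hi]
  exact hM.eigenvalues_pos i

/-- Lower Rayleigh bound: `M - τ_min(M) • 1` has nonnegative spectrum, hence is positive
semidefinite. -/
lemma tauMin_mul_norm_sq_le {M : Matrix (Fin p) (Fin p) ℝ} (hM : M.IsHermitian)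
    (x : EuclideanSpace ℝ (Fin p)) : tauMin M * ‖x‖ ^ 2 ≤ x ⬝ᵥ (M *ᵥ x) := by
  have hfin : (spectrum ℝ M).Finite := by
    rw [spectrum_eq_range hM]; exact Set.finite_range _
  have hpsd : (M - algebraMap ℝ _ (tauMin M)).PosSemidef := by
    rw [Matrix.posSemidef_iff_isHermitian_and_spectrum_nonneg]
    refine ⟨hM.sub (by simp [Matrix.IsHermitian, Matrix.algebraMap_eq_diagonal]), ?_⟩
    rw [← spectrum.sub_singleton_eq]
    rintro _ ⟨a, ha, _, rfl, rfl⟩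
    exact sub_nonneg.2 (csInf_le hfin.bddBelow ha)
  have h := hpsd.dotProduct_mulVec_nonneg x
  rw [Matrix.sub_mulVec, dotProduct_sub, Algebra.algebraMap_eq_smul_one, Matrix.smul_mulVec,
    Matrix.one_mulVec, dotProduct_smul] at h
  have hx := dotProduct_eq_inner x x
  rw [real_inner_self_eq_norm_sq] at hx
  simp only [star_trivial, smul_eq_mul, hx] at h
  linarith

/-- Upper Rayleigh bound: `τ_max(M) • 1 - M` has nonnegative spectrum, hence is positive
semidefinite. -/
lemma le_tauMax_mul_norm_sq {M : Matrix (Fin p) (Fin p) ℝ} (hM : M.IsHermitian)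
    (x : EuclideanSpace ℝ (Fin p)) : x ⬝ᵥ (M *ᵥ x) ≤ tauMax M * ‖x‖ ^ 2 := by
  have hfin : (spectrum ℝ M).Finite := by
    rw [spectrum_eq_range hM]; exact Set.finite_range _
  have hpsd : (algebraMap ℝ _ (tauMax M) - M).PosSemidef := by
    rw [Matrix.posSemidef_iff_isHermitian_and_spectrum_nonneg]
    refine ⟨Matrix.IsHermitian.sub
      (by simp [Matrix.IsHermitian, Matrix.algebraMap_eq_diagonal]) hM, ?_⟩
    rw [← spectrum.singleton_sub_eq]
    rintro _ ⟨_, rfl, a, ha, rfl⟩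
    exact sub_nonneg.2 (le_csSup hfin.bddAbove ha)
  have h := hpsd.dotProduct_mulVec_nonneg x
  rw [Matrix.sub_mulVec, dotProduct_sub, Algebra.algebraMap_eq_smul_one, Matrix.smul_mulVec,
    Matrix.one_mulVec, dotProduct_smul] at h
  have hx := dotProduct_eq_inner x x
  rw [real_inner_self_eq_norm_sq] at hx
  simp only [star_trivial, smul_eq_mul, hx] at h
  linarith

lemma sum_weights_le (κ d : EuclideanSpace ℝ (Fin p)) :
    ∑ j, κ j * |d j| ≤ ‖κ‖ * ‖d‖ := by
  have h := Real.sum_mul_le_sqrt_mul_sqrt Finset.univ (fun j => κ j) (fun j => |d j|)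
  simpa [EuclideanSpace.norm_eq] using h

/-- The scalar conclusion: a quadratic inequality in `D = |d|` is cancelled and squared, with
`A = |Gr|`, `B = λ₂|θ₀|` and `C = λ₁|κ|`. -/
lemma sq_le_of_basic_ineq {s D A B C : ℝ} (hs : 0 < s) (hD : 0 ≤ D) (hA : 0 ≤ A) (hB : 0 ≤ B)
    (hC : 0 ≤ C) (h : 3 / 4 * (s * D ^ 2) ≤ D * (A + B + C / 2)) :
    D ^ 2 ≤ 4 / s ^ 2 * (B ^ 2 + A ^ 2 + C ^ 2) := by
  have h1 : 3 / 4 * (s * D) ≤ A + B + C / 2 := by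
    rcases hD.eq_or_lt with h0 | h0
    · rw [← h0]; simp; positivity
    · refine le_of_mul_le_mul_left ?_ h0
      linarith
  have h2 : (3 / 4 * (s * D)) ^ 2 ≤ (A + B + C / 2) ^ 2 := by gcongr
  have h3 : (A + B + C / 2) ^ 2 ≤ 9 / 4 * (B ^ 2 + A ^ 2 + C ^ 2) := by
    nlinarith [sq_nonneg (A - B), sq_nonneg (A - 2 * C), sq_nonneg (B - 2 * C)]
  rw [div_mul_eq_mul_div, le_div_iff₀ (by positivity)]
  nlinarith

end Auxiliary

/-- a global minimizer `θ̂` of the single-block Elastic-Net objective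
`F₁(θ) = (θ−θ̃)ᵀG(θ−θ̃) + λ₁ Σ κ_j|θ_j| + λ₂|θ|²` satisfies, for every `θ₀`,
`|θ̂ − θ₀|² ≤ (4/(τ_min(G)+λ₂)²)(λ₂²|θ₀|² + τ_max(G²)|θ̃−θ₀|² + λ₁²|κ|²)`. -/
theorem stmt_6 (p : ℕ) (hp : 1 ≤ p)
    (G : Matrix (Fin p) (Fin p) ℝ) (hG : G.PosDef)
    (lam1 lam2 : ℝ) (hl1 : 0 ≤ lam1) (hl2 : 0 ≤ lam2)
    (κ : EuclideanSpace ℝ (Fin p)) (hκ : ∀ j, 0 ≤ κ j)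
    (tθ : EuclideanSpace ℝ (Fin p))
    (F : EuclideanSpace ℝ (Fin p) → ℝ)
    (hF : ∀ θ, F θ = (θ - tθ) ⬝ᵥ (G *ᵥ (θ - tθ)) + lam1 * ∑ j, κ j * |θ j| + lam2 * ‖θ‖ ^ 2)
    (θhat : EuclideanSpace ℝ (Fin p)) (hmin : ∀ θ, F θhat ≤ F θ)
    (θ0 : EuclideanSpace ℝ (Fin p)) :
    ‖θhat - θ0‖ ^ 2 ≤
      4 / (tauMin G + lam2) ^ 2 *
        (lam2 ^ 2 * ‖θ0‖ ^ 2 + tauMax (G ^ 2) * ‖tθ - θ0‖ ^ 2 + lam1 ^ 2 * ‖κ‖ ^ 2) := by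

  obtain ⟨d, rfl⟩ : ∃ d, θhat = θ0 + d := ⟨θhat - θ0, by abel⟩
  obtain ⟨r, rfl⟩ : ∃ r, tθ = θ0 + r := ⟨tθ - θ0, by abel⟩
  simp only [add_sub_cancel_left]
  have hsymm : ∀ x y : Fin p → ℝ, x ⬝ᵥ (G *ᵥ y) = y ⬝ᵥ (G *ᵥ x) := by
    intro x y
    have hT : Gᵀ = G := by simpa [Matrix.IsHermitian] using hG.isHermitian
    rw [Matrix.dotProduct_mulVec, ← Matrix.mulVec_transpose, hT, dotProduct_comm]
  have hmid := hmin (θ0 + (1 / 2 : ℝ) • d)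
  rw [hF, hF] at hmid
  have e1 : θ0 + d - (θ0 + r) = d - r := by abel
  have e2 : θ0 + (1 / 2 : ℝ) • d - (θ0 + r) = (1 / 2 : ℝ) • d - r := by abel
  simp only [← WithLp.ofLp_sub, e1, e2] at hmid
  simp only [WithLp.ofLp_sub, WithLp.ofLp_smul, Matrix.mulVec_sub, Matrix.mulVec_smul,
    dotProduct_sub, sub_dotProduct, dotProduct_smul, smul_dotProduct, smul_eq_mul,
    hsymm r d] at hmid
  rw [norm_add_sq_real, norm_add_sq_real, norm_smul, inner_smul_right] at hmid
  have hl : lam1 * ∑ j, κ j * |(θ0 + (1 / 2 : ℝ) • d) j| ≤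
      lam1 * ∑ j, κ j * |(θ0 + d) j| + lam1 * (1 / 2 * (‖κ‖ * ‖d‖)) := by
    rw [← mul_add]
    refine mul_le_mul_of_nonneg_left ?_ hl1
    refine le_trans ?_ (add_le_add_right
      (mul_le_mul_of_nonneg_left (sum_weights_le κ d) (by norm_num)) _)
    rw [Finset.mul_sum, ← Finset.sum_add_distrib]
    refine Finset.sum_le_sum fun j _ => ?_
    have h := abs_sub ((θ0 + d) j) (1 / 2 * d j)
    have e : (θ0 + (1 / 2 : ℝ) • d) j = (θ0 + d) j - 1 / 2 * d j := by
      simp; ring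
    rw [e]
    rw [abs_mul, abs_of_pos (by norm_num : (0 : ℝ) < 1 / 2)] at h
    nlinarith [mul_le_mul_of_nonneg_left h (hκ j)]
  -- `w = Gr` as a Euclidean vector, so that its norm is the Euclidean one.
  set w : EuclideanSpace ℝ (Fin p) := WithLp.toLp 2 (G *ᵥ r)
  have hdw : (d : Fin p → ℝ) ⬝ᵥ (G *ᵥ r) ≤ ‖d‖ * ‖w‖ := by
    have h := dotProduct_eq_inner d w
    rw [show (w : Fin p → ℝ) = G *ᵥ r from rfl] at h
    rw [h]
    exact real_inner_le_norm d w
  have hww : ‖w‖ ^ 2 ≤ tauMax (G ^ 2) * ‖r‖ ^ 2 := by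
    refine le_trans (le_of_eq ?_) (le_tauMax_mul_norm_sq (hG.isHermitian.pow 2) r)
    rw [← real_inner_self_eq_norm_sq, ← dotProduct_eq_inner, pow_two, ← Matrix.mulVec_mulVec,
      hsymm]
  have hQ := tauMin_mul_norm_sq_le hG.isHermitian d
  have hτ := tauMin_pos hp hG
  have hin : -(‖θ0‖ * ‖d‖) ≤ inner ℝ θ0 d := neg_le_of_abs_le (abs_real_inner_le_norm θ0 d)
  have hin' := mul_le_mul_of_nonneg_left hin hl2
  have hn : ‖(1 / 2 : ℝ)‖ = 1 / 2 := by norm_num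
  rw [hn] at hmid
  have key := sq_le_of_basic_ineq (s := tauMin G + lam2) (D := ‖d‖) (A := ‖w‖) (B := lam2 * ‖θ0‖)
    (C := lam1 * ‖κ‖) (by linarith) (norm_nonneg _) (norm_nonneg _) (by positivity)
    (by positivity) (by nlinarith)
  refine key.trans ?_
  rw [mul_pow, mul_pow]
  gcongr
end

section
/- Let n, Δ > 0, p ≥ 1. Let Ĝ^{αα} ∈ ℝ^{p×p} be symmetric positive definite with scaled matrix D̂^{αα} = (1/(nΔ)) Ĝ^{αα}, and suppose τ₁ ≤ τ_min(D̂^{αα}) and τ_max(D̂^{αα}) ≤ τ₂ for some τ₁, τ₂ > 0. Let λ₁, λ₂ ≥ 0, κ ∈ ℝ^p a nonnegative weight vector, α̃ ∈ ℝ^p, and let α̂ be a global minimizer of F₁(α) = (α−α̃)ᵀĜ^{αα}(α−α̃) + λ₁ Σ_{j=1}^p κ_j|α_j| + λ₂|α|². If the initial estimate satisfies |α̃ − α₀| ≤ (2ξ/μ) √(p/(nΔ)) for some ξ ≥ 0 and μ > 0, then |α̂ − α₀| ≤ (2/(nΔ τ₁ + λ₂)) ( λ₂|α₀| + (2 τ₂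 ξ/μ) √(nΔ · p) + λ₁|κ| ), where |κ| is the Euclidean norm of the weight vector. -/
/-!
Comparing the objective at the minimizer `αhat` with its value at `α0` and expanding around `α0`,
with `h = αhat - α0` and `d = α0 - tα`, gives the basic inequality
`hᵀGh + lam2 |h|² ≤ -2 hᵀGd + lam1 ∑ κ_j (|α0_j| - |αhat_j|) - 2 lam2 ⟪h, α0⟫`.
The spectral bounds turn the left side into at least `(nΔ τ1 + lam2)|h|²`
(`mul_norm_sq_le_quadForm`), and Cauchy-Schwarz bounds the right side by
`|h| (2 nΔ τ2 |d| + lam1 |κ| + 2 lam2 |α0|)` (`neg_le_bilinForm`, `sum_weight_abs_sub_le`).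
Dividing by `|h|` and inserting the bound on `|d|` finishes the proof, since
`nΔ √(p/(nΔ)) = √(nΔ p)`.
-/

open Matrix

lemma euclidean_norm_sq {p : ℕ} (v : EuclideanSpace ℝ (Fin p)) :
    ‖v‖ ^ 2 = v.ofLp ⬝ᵥ v.ofLp := by
  rw [EuclideanSpace.real_norm_sq_eq, dotProduct]
  exact Finset.sum_congr rfl fun i _ => by ring

lemma euclidean_inner {p : ℕ} (v w : EuclideanSpace ℝ (Fin p)) :
    inner ℝ v w = v.ofLp ⬝ᵥ w.ofLp := by
  rw [EuclideanSpace.inner_eq_star_dotProduct, star_trivial, dotProduct_comm]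

lemma mul_norm_sq_le_quadForm {p : ℕ} {M : Matrix (Fin p) (Fin p) ℝ} (hM : M.IsHermitian)
    {t : ℝ} (ht : t ≤ tauMin M) (v : EuclideanSpace ℝ (Fin p)) :
    t * ‖v‖ ^ 2 ≤ v.ofLp ⬝ᵥ (M *ᵥ v.ofLp) := by
  have hps : (M - algebraMap ℝ _ t).PosSemidef := by
    rw [Matrix.posSemidef_iff_isHermitian_and_spectrum_nonneg]
    refine ⟨hM.sub ?_, ?_⟩
    · rw [algebraMap_eq_diagonal]
      exact isHermitian_diagonal _
    · rw [← spectrum.sub_singleton_eq]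
      rintro _ ⟨x, hx, _, rfl, rfl⟩
      have := csInf_le (Matrix.finite_real_spectrum (A := M)).bddBelow hx
      simp only [tauMin, Set.mem_ofPred_eq] at *
      linarith
  have h := hps.dotProduct_mulVec_nonneg v.ofLp
  rw [star_trivial, sub_mulVec, dotProduct_sub, Algebra.algebraMap_eq_smul_one, smul_mulVec,
    one_mulVec, dotProduct_smul, ← euclidean_norm_sq, smul_eq_mul] at h
  linarith

lemma quadForm_le_mul_norm_sq {p : ℕ} {M : Matrix (Fin p) (Fin p) ℝ} (hM : M.IsHermitian)
    {t : ℝ} (ht : tauMax M ≤ t) (v : EuclideanSpace ℝ (Fin p)) :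
    v.ofLp ⬝ᵥ (M *ᵥ v.ofLp) ≤ t * ‖v‖ ^ 2 := by
  have hps : (algebraMap ℝ _ t - M).PosSemidef := by
    rw [Matrix.posSemidef_iff_isHermitian_and_spectrum_nonneg]
    refine ⟨IsHermitian.sub ?_ hM, ?_⟩
    · rw [algebraMap_eq_diagonal]
      exact isHermitian_diagonal _
    · rw [← spectrum.singleton_sub_eq]
      rintro _ ⟨_, rfl, x, hx, rfl⟩
      have := le_csSup (Matrix.finite_real_spectrum (A := M)).bddAbove hx
      simp only [tauMax, Set.mem_ofPred_eq] at *
      linarith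
  have h := hps.dotProduct_mulVec_nonneg v.ofLp
  rw [star_trivial, sub_mulVec, dotProduct_sub, Algebra.algebraMap_eq_smul_one, smul_mulVec,
    one_mulVec, dotProduct_smul, ← euclidean_norm_sq, smul_eq_mul] at h
  linarith

lemma bilinForm_comm {p : ℕ} {M : Matrix (Fin p) (Fin p) ℝ} (hM : M.IsHermitian)
    (v w : Fin p → ℝ) : w ⬝ᵥ (M *ᵥ v) = v ⬝ᵥ (M *ᵥ w) := by
  have hT : Mᵀ = M := by simpa [conjTranspose_eq_transpose_of_trivial] using hM.eq
  rw [dotProduct_mulVec, ← mulVec_transpose, hT, dotProduct_comm]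

/-- Cauchy-Schwarz for a positive semidefinite form bounded by `c |v|²`, obtained by polarizing
the vectors `|w| v` and `|v| w`, which have equal length. -/
lemma neg_le_bilinForm {p : ℕ} {M : Matrix (Fin p) (Fin p) ℝ} (hM : M.PosSemidef) {c : ℝ}
    (hc : 0 ≤ c)
    (hle : ∀ v : EuclideanSpace ℝ (Fin p), v.ofLp ⬝ᵥ (M *ᵥ v.ofLp) ≤ c * ‖v‖ ^ 2)
    (v w : EuclideanSpace ℝ (Fin p)) :
    -(c * ‖v‖ * ‖w‖) ≤ v.ofLp ⬝ᵥ (M *ᵥ w.ofLp) := by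
  rcases eq_or_ne v 0 with rfl | hv
  · simp
  rcases eq_or_ne w 0 with rfl | hw
  · simp
  have hv' : 0 < ‖v‖ := norm_pos_iff.2 hv
  have hw' : 0 < ‖w‖ := norm_pos_iff.2 hw
  set a := ‖v‖ with ha
  set b := ‖w‖ with hb
  have h1 := hM.dotProduct_mulVec_nonneg (b • v + a • w).ofLp
  have h2 := hle (b • v - a • w)
  have h3 : ‖b • v - a • w‖ ≤ 2 * (a * b) := by
    refine (norm_sub_le _ _).trans (le_of_eq ?_)
    rw [norm_smul, norm_smul, Real.norm_of_nonneg hw'.le, Real.norm_of_nonneg hv'.le, ← ha, ← hb]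
    ring
  have h4 : c * ‖b • v - a • w‖ ^ 2 ≤ c * (2 * (a * b)) ^ 2 := by gcongr
  have h5 := bilinForm_comm hM.isHermitian v.ofLp w.ofLp
  simp only [star_trivial, WithLp.ofLp_add, WithLp.ofLp_sub, WithLp.ofLp_smul, mulVec_add,
    mulVec_sub, mulVec_smul, dotProduct_add, dotProduct_sub, add_dotProduct, sub_dotProduct,
    smul_dotProduct, dotProduct_smul, smul_eq_mul, h5] at h1 h2
  have hab : 0 < a * b := mul_pos hv' hw'
  have h6 : 0 ≤ (a * b) * (v.ofLp ⬝ᵥ (M *ᵥ w.ofLp) + c * a * b) := by nlinarith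
  have := nonneg_of_mul_nonneg_right h6 hab
  linarith

lemma sum_weight_abs_sub_le {p : ℕ} (κ : EuclideanSpace ℝ (Fin p)) (hκ : ∀ j, 0 ≤ κ j)
    (a b : EuclideanSpace ℝ (Fin p)) :
    ∑ j, κ j * |b j| - ∑ j, κ j * |a j| ≤ ‖κ‖ * ‖a - b‖ := by
  have hnorm : ‖a - b‖ = ‖(WithLp.toLp 2 fun j => |a j - b j| : EuclideanSpace ℝ (Fin p))‖ := by
    simp [EuclideanSpace.norm_eq]
  rw [hnorm, ← Finset.sum_sub_distrib]
  refine le_trans ?_ (real_inner_le_norm _ _)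
  rw [euclidean_inner, dotProduct]
  refine Finset.sum_le_sum fun j _ => ?_
  rw [← mul_sub]
  refine mul_le_mul_of_nonneg_left ?_ (hκ j)
  change _ ≤ |a j - b j|
  rw [abs_sub_comm (a j)]
  exact abs_sub_abs_le_abs_sub _ _

/-- for the drift block, with `τ₁ ≤ τ_min(D̂^{αα})`,
`τ_max(D̂^{αα}) ≤ τ₂` for `D̂^{αα} = (1/(nΔ))Ĝ^{αα}`, if the initial estimate
satisfies `|α̃ − α₀| ≤ (2ξ/μ)√(p/(nΔ))` then the Elastic-Net minimizer `α̂` of `F₁`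
satisfies `|α̂ − α₀| ≤ (2/(nΔτ₁+λ₂))(λ₂|α₀| + (2τ₂ξ/μ)√(nΔ·p) + λ₁|κ|)`. -/
theorem stmt_11 (p : ℕ) (hp : 1 ≤ p) (n Δ : ℝ) (hn : 0 < n) (hΔ : 0 < Δ)
    (G : Matrix (Fin p) (Fin p) ℝ) (hG : G.PosDef)
    (τ1 τ2 : ℝ) (hτ1 : 0 < τ1) (hτ2 : 0 < τ2)
    (hτmin : τ1 ≤ tauMin ((1 / (n * Δ)) • G)) (hτmax : tauMax ((1 / (n * Δ)) • G) ≤ τ2)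
    (lam1 lam2 : ℝ) (hl1 : 0 ≤ lam1) (hl2 : 0 ≤ lam2)
    (κ : EuclideanSpace ℝ (Fin p)) (hκ : ∀ j, 0 ≤ κ j)
    (tα α0 : EuclideanSpace ℝ (Fin p))
    (F1 : EuclideanSpace ℝ (Fin p) → ℝ)
    (hF1 : ∀ α, F1 α = (α - tα) ⬝ᵥ (G *ᵥ (α - tα)) + lam1 * ∑ j, κ j * |α j|
      + lam2 * ‖α‖ ^ 2)
    (αhat : EuclideanSpace ℝ (Fin p)) (hαhat : ∀ α, F1 αhat ≤ F1 α)
    (ξ μ : ℝ) (hξ : 0 ≤ ξ) (hμ : 0 < μ)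
    (hinit : ‖tα - α0‖ ≤ 2 * ξ / μ * Real.sqrt (p / (n * Δ))) :
    ‖αhat - α0‖ ≤ 2 / (n * Δ * τ1 + lam2) *
      (lam2 * ‖α0‖ + 2 * τ2 * ξ / μ * Real.sqrt (n * Δ * p) + lam1 * ‖κ‖) := by
  have hN : 0 < n * Δ := mul_pos hn hΔ
  have hH : ((1 / (n * Δ)) • G).IsHermitian := by
    rw [Matrix.IsHermitian, conjTranspose_smul, hG.isHermitian.eq, star_trivial]
  have hlow : ∀ v : EuclideanSpace ℝ (Fin p),
      n * Δ * τ1 * ‖v‖ ^ 2 ≤ v.ofLp ⬝ᵥ (G *ᵥ v.ofLp) := by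
    intro v
    have h := mul_norm_sq_le_quadForm hH hτmin v
    rw [smul_mulVec, dotProduct_smul, smul_eq_mul, one_div, inv_mul_eq_div, le_div_iff₀ hN] at h
    linarith
  have hupp : ∀ v : EuclideanSpace ℝ (Fin p),
      v.ofLp ⬝ᵥ (G *ᵥ v.ofLp) ≤ n * Δ * τ2 * ‖v‖ ^ 2 := by
    intro v
    have h := quadForm_le_mul_norm_sq hH hτmax v
    rw [smul_mulVec, dotProduct_smul, smul_eq_mul, one_div, inv_mul_eq_div, div_le_iff₀ hN] at h
    linarith
  obtain ⟨h, hh⟩ : ∃ h, h = αhat - α0 := ⟨_, rfl⟩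
  obtain ⟨d, hd⟩ : ∃ d, d = α0 - tα := ⟨_, rfl⟩
  have hmin := hαhat α0
  have hdn : ‖d‖ ≤ 2 * ξ / μ * Real.sqrt (p / (n * Δ)) := by
    rw [hd, norm_sub_rev]; exact hinit
  have hcross := neg_le_bilinForm hG.posSemidef (by positivity) hupp h d
  have hquad := hlow h
  have hl1' := mul_le_mul_of_nonneg_left (sum_weight_abs_sub_le κ hκ αhat α0) hl1
  have hinner := neg_le_of_abs_le (abs_real_inner_le_norm h α0)
  have hsq : ‖αhat‖ ^ 2 = ‖h‖ ^ 2 + 2 * inner ℝ h α0 + ‖α0‖ ^ 2 := by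
    rw [← norm_add_sq_real, hh, sub_add_cancel]
  have e1 : αhat.ofLp - tα.ofLp = h.ofLp + d.ofLp := by
    rw [hh, hd, WithLp.ofLp_sub, WithLp.ofLp_sub, sub_add_sub_cancel]
  have e2 : α0.ofLp - tα.ofLp = d.ofLp := by rw [hd, WithLp.ofLp_sub]
  rw [hF1, hF1, hsq, WithLp.ofLp_sub, WithLp.ofLp_sub, e1, e2, mulVec_add, dotProduct_add,
    add_dotProduct, add_dotProduct, bilinForm_comm hG.isHermitian h.ofLp d.ofLp] at hmin
  rw [← hh] at hl1' ⊢
  have hl2' := mul_le_mul_of_nonneg_left hinner hl2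
  have hbasic : ‖h‖ * ((n * Δ * τ1 + lam2) * ‖h‖) ≤
      ‖h‖ * (2 * (lam2 * ‖α0‖ + n * Δ * τ2 * ‖d‖ + lam1 * ‖κ‖)) := by
    have : 0 ≤ lam1 * (‖κ‖ * ‖h‖) := by positivity
    linarith
  have hsqrt : n * Δ * Real.sqrt (p / (n * Δ)) = Real.sqrt (n * Δ * p) := by
    rw [Real.sqrt_div' _ hN.le, Real.sqrt_mul hN.le]
    have hs : 0 < Real.sqrt (n * Δ) := Real.sqrt_pos.2 hN
    field_simp
    rw [Real.sq_sqrt hN.le]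
  have hdn' : n * Δ * τ2 * ‖d‖ ≤ 2 * τ2 * ξ / μ * Real.sqrt (n * Δ * p) := by
    refine (mul_le_mul_of_nonneg_left hdn (by positivity)).trans (le_of_eq ?_)
    rw [← hsqrt]
    ring
  have hpos : 0 < n * Δ * τ1 + lam2 := by positivity
  rw [div_mul_eq_mul_div, le_div_iff₀ hpos]
  rcases (norm_nonneg h).eq_or_lt with h0 | h0
  · rw [← h0, zero_mul]
    positivity
  · have := le_of_mul_le_mul_left hbasic h0
    linarith
end
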